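/- Let (u, v) be a C² solution of the p-system on the whole cylinder ℝ × ℝ (1-periodic in x) with u(t, x) ≥ 0 for all (t, x), and let f : ℝ → ℝ be C² with f(0) = 0, f(s) > 0 for all s > 0, and f''(s) < 0 for all s ≥ 0. Define E(t) = ∫₀¹ f(u(t, x)) dx. Then E is twice differentiable with E''(t) = ∫₀¹ f''(u(t, x)) ((∂v/∂x)² + p'(u(t, x)) (∂u/∂x)²) dx, and consequently E''(t) ≤ 0 for all t (E is concave). -/

import Mathlib

/-!
Write `w = ∂ₜv`. Differentiating twice under the integral sign gives
`E'' = ∫ ∂ₜ(f'(u) ∂ₜu)`, and the p-system together with the symmetry of second derivatives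
(`∂ₜ∂ₜu = -∂ₜ∂ₓv = -∂ₓw`) turns the integrand into
`f''(u) (vₓ² + p'(u) uₓ²) - ∂ₓ(f'(u) w)`, because `w = p'(u) uₓ`. The last term is the
`x`-derivative of a 1-periodic function, so it integrates to zero over a period. The sign follows
from `f'' < 0` and `p' ≥ 0` on `[0, ∞)`, where `u` takes its values.

Partial derivatives are handled as the Fréchet derivative applied to `(1, 0)` and `(0, 1)`;
differentiation under the integral sign is `hasDerivAt_integral_of_contDiff_one`.
-/

/-- `q(w) = ∫_w^0 √(-p'(s)) ds`. -/
noncomputable def qfun (p : ℝ → ℝ) (w : ℝ) : ℝ :=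
  ∫ s in w..(0:ℝ), Real.sqrt (-(deriv p s))

/-- `(u, v)` solves the p-system `u_t = -v_x`, `v_t = (p(u))_x` on the domain `D`. -/
def PSystem (p : ℝ → ℝ) (u v : ℝ × ℝ → ℝ) (D : Set (ℝ × ℝ)) : Prop :=
  ∀ z ∈ D,
    deriv (fun s => u (s, z.2)) z.1 = -deriv (fun y => v (z.1, y)) z.2 ∧
    deriv (fun s => v (s, z.2)) z.1 = deriv (fun y => p (u (z.1, y))) z.2

lemma hasDerivAt_fst_slice {g : ℝ × ℝ → ℝ} (hg : Differentiable ℝ g) (t x : ℝ) :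
    HasDerivAt (fun s => g (s, x)) (fderiv ℝ g (t, x) (1, 0)) t :=
  (hg (t, x)).hasFDerivAt.comp_hasDerivAt t ((hasDerivAt_id t).prodMk (hasDerivAt_const t x))

lemma hasDerivAt_snd_slice {g : ℝ × ℝ → ℝ} (hg : Differentiable ℝ g) (t x : ℝ) :
    HasDerivAt (fun y => g (t, y)) (fderiv ℝ g (t, x) (0, 1)) x :=
  (hg (t, x)).hasFDerivAt.comp_hasDerivAt x ((hasDerivAt_const x t).prodMk (hasDerivAt_id x))

lemma contDiff_one_fderiv_apply {g : ℝ × ℝ → ℝ} (hg : ContDiff ℝ 2 g) (a : ℝ × ℝ) :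
    ContDiff ℝ 1 (fun z => fderiv ℝ g z a) :=
  (hg.fderiv_right (m := 1) (by norm_num)).clm_apply contDiff_const

lemma contDiff_one_deriv {f : ℝ → ℝ} (hf : ContDiff ℝ 2 f) : ContDiff ℝ 1 (deriv f) := by
  have h : ContDiff ℝ (1 + 1) f := by simpa [one_add_one_eq_two] using hf
  exact (contDiff_succ_iff_deriv.1 h).2.2

lemma fderiv_fderiv_apply_comm {g : ℝ × ℝ → ℝ} (hg : ContDiff ℝ 2 g) (z a b : ℝ × ℝ) :
    fderiv ℝ (fun y => fderiv ℝ g y a) z b = fderiv ℝ (fun y => fderiv ℝ g y b) z a := by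
  have hd : DifferentiableAt ℝ (fderiv ℝ g) z :=
    (hg.fderiv_right (m := 1) (by norm_num)).differentiable (by norm_num) z
  have key : ∀ c d : ℝ × ℝ,
      fderiv ℝ (fun y => fderiv ℝ g y c) z d = fderiv ℝ (fderiv ℝ g) z d c := by
    intro c d
    rw [(hd.hasFDerivAt.clm_apply (hasFDerivAt_const c z)).fderiv]
    simp
  rw [key, key]
  exact (hg.contDiffAt.isSymmSndFDerivAt (by simp)).eq b a

/-- The dominating constant is the maximum of the `t`-derivative over the compact set
`[t - 1, t + 1] × [0, 1]`. -/
lemma hasDerivAt_integral_of_contDiff_one {g : ℝ × ℝ → ℝ} (hg : ContDiff ℝ 1 g) (t : ℝ) :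
    HasDerivAt (fun s => ∫ x in (0:ℝ)..1, g (s, x))
      (∫ x in (0:ℝ)..1, fderiv ℝ g (t, x) (1, 0)) t := by
  have hdc : Continuous (fun z => fderiv ℝ g z (1, 0)) :=
    (hg.continuous_fderiv (by norm_num)).clm_apply continuous_const
  have hgc : Continuous g := hg.continuous
  obtain ⟨C, hC⟩ := ((isCompact_closedBall t 1).prod
    (isCompact_Icc (a := (0:ℝ)) (b := 1))).exists_bound_of_continuousOn hdc.continuousOn
  refine (intervalIntegral.hasDerivAt_integral_of_dominated_loc_of_deriv_le
    (F := fun s x => g (s, x)) (F' := fun s x => fderiv ℝ g (s, x) (1, 0))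
    (bound := fun _ => C) (s := Metric.closedBall t 1)
    (Metric.closedBall_mem_nhds t one_pos) ?_ ?_ ?_ ?_ ?_ ?_).2
  · exact Filter.Eventually.of_forall fun s =>
      (hgc.comp (Continuous.prodMk_right s)).aestronglyMeasurable
  · exact (hgc.comp (Continuous.prodMk_right t)).intervalIntegrable _ _
  · exact (hdc.comp (Continuous.prodMk_right t)).aestronglyMeasurable
  · refine Filter.Eventually.of_forall fun x hx s hs => hC (s, x) ⟨hs, ?_⟩
    rw [Set.uIoc_of_le zero_le_one] at hx
    exact Set.Ioc_subset_Icc_self hx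
  · exact intervalIntegrable_const
  · exact Filter.Eventually.of_forall fun x _ s _ =>
      hasDerivAt_fst_slice (hg.differentiable (by norm_num)) s x

lemma integral_fderiv_snd_eq_zero {g : ℝ × ℝ → ℝ} (hg : ContDiff ℝ 1 g) (t : ℝ)
    (hper : g (t, 1) = g (t, 0)) : ∫ x in (0:ℝ)..1, fderiv ℝ g (t, x) (0, 1) = 0 := by
  have hdc : Continuous (fun z => fderiv ℝ g z (0, 1)) :=
    (hg.continuous_fderiv (by norm_num)).clm_apply continuous_const
  rw [intervalIntegral.integral_eq_sub_of_hasDerivAt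
    (fun x _ => hasDerivAt_snd_slice (hg.differentiable (by norm_num)) t x)
    ((hdc.comp (Continuous.prodMk_right t)).intervalIntegrable _ _), hper, sub_self]

lemma fderiv_comp_mul_apply {φ : ℝ → ℝ} {u w : ℝ × ℝ → ℝ} (hφ : Differentiable ℝ φ)
    (hu : Differentiable ℝ u) (hw : Differentiable ℝ w) (z a : ℝ × ℝ) :
    fderiv ℝ (fun y => φ (u y) * w y) z a =
      deriv φ (u z) * fderiv ℝ u z a * w z + φ (u z) * fderiv ℝ w z a := by
  have h1 := (hφ (u z)).hasDerivAt.comp_hasFDerivAt z (hu z).hasFDerivAt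
  have h2 : HasFDerivAt (fun y => φ (u y) * w y) _ z := h1.mul (hw z).hasFDerivAt
  rw [h2.fderiv]
  simp
  ring

/-- The convexity argument in the elliptic region: for a `C²` solution of the
p-system on the whole cylinder (1-periodic in `x`) with `u ≥ 0`, and `f` a `C²`
function with `f(0) = 0`, `f > 0` on `(0,∞)` and `f'' < 0` on `[0,∞)`, the
energy `E(t) = ∫₀¹ f(u(t,x)) dx` is twice differentiable with
`E''(t) = ∫₀¹ f''(u)((v_x)² + p'(u)(u_x)²) dx ≤ 0`, so `E` is concave. -/
theorem psystem_elliptic_energy_concave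
    (p : ℝ → ℝ) (hp : ContDiff ℝ 2 p) (hconv : ∀ w : ℝ, 0 < deriv (deriv p) w)
    (hp0 : p 0 = 0) (hp'0 : deriv p 0 = 0)
    (u v : ℝ × ℝ → ℝ) (hu : ContDiff ℝ 2 u) (hv : ContDiff ℝ 2 v)
    (hsys : PSystem p u v Set.univ)
    (huper : ∀ t x : ℝ, u (t, x + 1) = u (t, x))
    (hvper : ∀ t x : ℝ, v (t, x + 1) = v (t, x))
    (hnn : ∀ z : ℝ × ℝ, 0 ≤ u z)
    (f : ℝ → ℝ) (hf : ContDiff ℝ 2 f) (hf0 : f 0 = 0)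
    (hfpos : ∀ s : ℝ, 0 < s → 0 < f s)
    (hfcc : ∀ s : ℝ, 0 ≤ s → deriv (deriv f) s < 0)
    (E : ℝ → ℝ) (hE : E = fun t => ∫ x in (0:ℝ)..1, f (u (t, x))) :
    ∃ E₁ : ℝ → ℝ, (∀ t : ℝ, HasDerivAt E (E₁ t) t) ∧
      ∀ t : ℝ,
        HasDerivAt E₁
          (∫ x in (0:ℝ)..1, deriv (deriv f) (u (t, x)) *
            ((deriv (fun y => v (t, y)) x) ^ 2 +
              deriv p (u (t, x)) * (deriv (fun y => u (t, y)) x) ^ 2)) t ∧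
        (∫ x in (0:ℝ)..1, deriv (deriv f) (u (t, x)) *
            ((deriv (fun y => v (t, y)) x) ^ 2 +
              deriv p (u (t, x)) * (deriv (fun y => u (t, y)) x) ^ 2)) ≤ 0 := by
  have hud : Differentiable ℝ u := hu.differentiable (by norm_num)
  have hvd : Differentiable ℝ v := hv.differentiable (by norm_num)
  have hpd : Differentiable ℝ p := hp.differentiable (by norm_num)
  have hfd : Differentiable ℝ f := hf.differentiable (by norm_num)
  have hf' : ContDiff ℝ 1 (deriv f) := contDiff_one_deriv hf
  have hu1 : ContDiff ℝ 1 u := hu.of_le (by norm_num)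
  have hf'd : Differentiable ℝ (deriv f) := hf'.differentiable (by norm_num)
  have hut1 := contDiff_one_fderiv_apply hu (1, 0)
  have hvt1 := contDiff_one_fderiv_apply hv (1, 0)
  have sys1 : ∀ z, fderiv ℝ u z (1, 0) = -fderiv ℝ v z (0, 1) := by
    rintro ⟨t, x⟩
    have h := (hsys (t, x) trivial).1
    rwa [(hasDerivAt_fst_slice hud t x).deriv, (hasDerivAt_snd_slice hvd t x).deriv] at h
  have sys2 : ∀ z, fderiv ℝ v z (1, 0) = deriv p (u z) * fderiv ℝ u z (0, 1) := by
    rintro ⟨t, x⟩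
    have h := (hsys (t, x) trivial).2
    have hc : HasDerivAt (fun y => p (u (t, y))) _ x :=
      (hpd (u (t, x))).hasDerivAt.comp x (hasDerivAt_snd_slice hud t x)
    rwa [(hasDerivAt_fst_slice hvd t x).deriv, hc.deriv] at h
  have hutt : ∀ z, fderiv ℝ (fun y => fderiv ℝ u y (1, 0)) z (1, 0) =
      -fderiv ℝ (fun y => fderiv ℝ v y (1, 0)) z (0, 1) := by
    intro z
    rw [← fderiv_fderiv_apply_comm hv z (0, 1) (1, 0), funext sys1, fderiv_fun_neg]
    simp
  have hA : ContDiff ℝ 1 (fun z => deriv f (u z) * fderiv ℝ u z (1, 0)) :=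
    (hf'.comp hu1).mul hut1
  have hG : ContDiff ℝ 1 (fun z => deriv f (u z) * fderiv ℝ v z (1, 0)) :=
    (hf'.comp hu1).mul hvt1
  have hGper : ∀ t, deriv f (u (t, 1)) * fderiv ℝ v (t, 1) (1, 0) =
      deriv f (u (t, 0)) * fderiv ℝ v (t, 0) (1, 0) := by
    intro t
    have h1 : u (t, 1) = u (t, 0) := by simpa using huper t 0
    have h2 : (fun s => v (s, 1)) = fun s => v (s, 0) := by
      funext s
      simpa using hvper s 0
    rw [h1, ← (hasDerivAt_fst_slice hvd t 1).deriv, ← (hasDerivAt_fst_slice hvd t 0).deriv, h2]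
  have hp'nn : ∀ s, 0 ≤ s → 0 ≤ deriv p s := by
    intro s hs
    have h := (strictMono_of_deriv_pos hconv).monotone hs
    rwa [hp'0] at h
  -- `E₁ = ∫ f'(u) ∂ₜu`, the derivative of `E` under the integral sign.
  refine ⟨fun t => ∫ x in (0:ℝ)..1, deriv f (u (t, x)) * fderiv ℝ u (t, x) (1, 0), ?_, ?_⟩
  · intro t
    rw [hE]
    have h : HasDerivAt (fun t => ∫ x in (0:ℝ)..1, f (u (t, x))) _ t :=
      hasDerivAt_integral_of_contDiff_one ((hf.of_le (by norm_num)).comp hu1) t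
    refine h.congr_deriv ?_
    refine intervalIntegral.integral_congr fun x _ => ?_
    have hc := (hfd (u (t, x))).hasDerivAt.comp_hasFDerivAt (t, x) (hud (t, x)).hasFDerivAt
    simp [hc.fderiv]
  · intro t
    have hvx : ∀ x, deriv (fun y => v (t, y)) x = fderiv ℝ v (t, x) (0, 1) :=
      fun x => (hasDerivAt_snd_slice hvd t x).deriv
    have hux : ∀ x, deriv (fun y => u (t, y)) x = fderiv ℝ u (t, x) (0, 1) :=
      fun x => (hasDerivAt_snd_slice hud t x).deriv
    simp only [hvx, hux]
    constructor
    · have h := hasDerivAt_integral_of_contDiff_one hA t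
      convert h using 1
      have hzero := integral_fderiv_snd_eq_zero hG t (hGper t)
      have hslice : Continuous fun x : ℝ => (t, x) := Continuous.prodMk_right t
      have hAi : IntervalIntegrable (fun x => fderiv ℝ
          (fun z => deriv f (u z) * fderiv ℝ u z (1, 0)) (t, x) (1, 0))
          MeasureTheory.volume 0 1 :=
        (((hA.continuous_fderiv (by norm_num)).comp hslice).clm_apply
          continuous_const).intervalIntegrable _ _
      have hGi : IntervalIntegrable (fun x => fderiv ℝ
          (fun z => deriv f (u z) * fderiv ℝ v z (1, 0)) (t, x) (0, 1))
          MeasureTheory.volume 0 1 :=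
        (((hG.continuous_fderiv (by norm_num)).comp hslice).clm_apply
          continuous_const).intervalIntegrable _ _
      -- Add the vanishing integral of `∂ₓ(f'(u) ∂ₜv)`; the integrands then agree pointwise.
      refine Eq.trans ?_ ((intervalIntegral.integral_add hAi hGi).trans
        (by rw [hzero, add_zero]))
      refine intervalIntegral.integral_congr fun x _ => ?_
      beta_reduce
      rw [fderiv_comp_mul_apply hf'd hud (hut1.differentiable (by norm_num)),
        fderiv_comp_mul_apply hf'd hud (hvt1.differentiable (by norm_num)), hutt, sys1, sys2]
      ring
    · rw [← neg_nonneg, ← intervalIntegral.integral_neg]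
      refine intervalIntegral.integral_nonneg zero_le_one fun x _ => neg_nonneg.2 ?_
      have hp1 := hp'nn _ (hnn (t, x))
      exact mul_nonpos_of_nonpos_of_nonneg (hfcc _ (hnn _)).le (by positivity)
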